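/- arXiv:2305.07729 — 2 statements merged into one kernel-verified Lean document; each statement's English description precedes it below -/
import Mathlib

section
/- Let n be a positive integer and let a, b : Fin n → ℕ. If there exists a permutation σ of Fin n such that max(∑_i a_i², ∑_i b_i²) ≤ ∑_i a_i · b_{σ(i)}, then a is a permutation of b (the multiset of values of a equals that of b). -/
/-!
Reindexing by `σ` does not change `∑ i, b i ^ 2`, so the hypothesis gives
`∑ i, (a i - b (σ i)) ^ 2 = ∑ i, a i ^ 2 + ∑ i, b i ^ 2 - 2 * ∑ i, a i * b (σ i) ≤ 0` over `ℤ`.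
Hence every square vanishes and `a = b ∘ σ`. This is the equality case of the Cauchy–Schwarz
inequality, applied directly to the given `σ`; the Rearrangement Inequality is not needed.
-/

/-- If some permutation `σ` makes the rearranged sum reach the threshold
`max (∑ i, a i ^ 2) (∑ i, b i ^ 2)`, then `a` is a permutation of `b`. -/
theorem perm_of_rearranged_sum_ge (n : ℕ) (hn : 0 < n) (a b : Fin n → ℕ)
    (h : ∃ σ : Equiv.Perm (Fin n),
        max (∑ i, a i ^ 2) (∑ i, b i ^ 2) ≤ ∑ i, a i * b (σ i)) :
    Multiset.map a Finset.univ.val = Multiset.map b Finset.univ.val := by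
  obtain ⟨σ, hσ⟩ := h
  obtain ⟨ha, hb⟩ := max_le_iff.mp hσ
  rw [← Equiv.sum_comp σ (fun i => b i ^ 2)] at hb
  zify at ha hb
  have hle : ∑ i, ((a i : ℤ) - b (σ i)) ^ 2 ≤ 0 := by
    have hexp : ∑ i, ((a i : ℤ) - b (σ i)) ^ 2
        = ∑ i, (a i : ℤ) ^ 2 + ∑ i, (b (σ i) : ℤ) ^ 2 - 2 * ∑ i, (a i : ℤ) * b (σ i) := by
      rw [Finset.mul_sum, ← Finset.sum_add_distrib, ← Finset.sum_sub_distrib]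
      exact Finset.sum_congr rfl fun i _ => by ring
    linarith
  have hzero := (Finset.sum_eq_zero_iff_of_nonneg fun i _ => sq_nonneg _).mp
    (le_antisymm hle (Finset.sum_nonneg fun i _ => sq_nonneg _))
  have hab : a = b ∘ σ := funext fun i => by
    have hi := pow_eq_zero_iff two_ne_zero |>.mp (hzero i (Finset.mem_univ i))
    exact_mod_cast sub_eq_zero.mp hi
  rw [hab, ← Multiset.map_map, Multiset.map_univ_val_equiv]
end

section
/- Let n be a positive integer and let a, b : Fin n → ℕ. Then a is a permutation of b (the multiset of values of a equals that of b) if and only if there exists a permutation σ of Fin n such that max(∑_i a_i², ∑_i b_i²) ≤ ∑_i a_i · b_{σ(i)}. -/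
/-!
For any `σ`, `∑ (a i - b (σ i))² = ∑ a i² + ∑ b i² - 2 ∑ a i * b (σ i)`, since reindexing by `σ`
does not change `∑ b i²`. If the rearranged sum is at least both sums of squares, the right side
is nonpositive, so `a = b ∘ σ`. Conversely, equal multisets of values give fibres of equal
cardinality over each value, hence a `σ` with `a = b ∘ σ`, and then all three sums agree.
-/

/-- Matching the fibres of `a` and `b` over each value, which have equal cardinality by
comparison of multiplicities, yields the permutation. -/
theorem exists_perm_of_map_univ_eq {n : ℕ} {a b : Fin n → ℕ}
    (h : Multiset.map a Finset.univ.val = Multiset.map b Finset.univ.val) :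
    ∃ σ : Equiv.Perm (Fin n), ∀ i, a i = b (σ i) := by
  have hcard (c : ℕ) : Fintype.card {i // a i = c} = Fintype.card {i // b i = c} := by
    have hc := congrArg (Multiset.count c) h
    rw [Multiset.count_map, Multiset.count_map] at hc
    simp only [Fintype.card_subtype, Finset.card, Finset.filter_val]
    simpa only [eq_comm] using hc
  exact ⟨Equiv.ofFiberEquiv fun c => Fintype.equivOfCardEq (hcard c),
    fun i => (Equiv.ofFiberEquiv_map _ i).symm⟩

/-- Correctness of the reduction from the Permutation Problem to OSSI:
`a` is a permutation of `b` iff some permutation `σ` makes the rearranged sum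
reach the threshold `max (∑ i, a i ^ 2) (∑ i, b i ^ 2)`. -/
theorem perm_iff_rearranged_sum_ge (n : ℕ) (hn : 0 < n) (a b : Fin n → ℕ) :
    Multiset.map a Finset.univ.val = Multiset.map b Finset.univ.val ↔
      ∃ σ : Equiv.Perm (Fin n),
        max (∑ i, a i ^ 2) (∑ i, b i ^ 2) ≤ ∑ i, a i * b (σ i) := by
  constructor
  · intro h
    obtain ⟨σ, hσ⟩ := exists_perm_of_map_univ_eq h
    refine ⟨σ, ?_⟩
    rw [← Equiv.sum_comp σ (fun i => b i ^ 2)]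
    simp [hσ, sq]
  · rintro ⟨σ, hσ⟩
    rw [← Equiv.sum_comp σ (fun i => b i ^ 2), max_le_iff] at hσ
    obtain ⟨ha, hb⟩ := hσ
    -- The squares are taken in `ℤ`, where subtraction is not truncated.
    have hle : ∑ i, ((a i : ℤ) - b (σ i)) ^ 2 ≤ 0 := by
      zify at ha hb
      simp only [sub_sq, Finset.sum_add_distrib, Finset.sum_sub_distrib, mul_assoc,
        ← Finset.mul_sum]
      linarith
    have hzero := (Finset.sum_eq_zero_iff_of_nonneg fun i _ => sq_nonneg _).1
      (le_antisymm hle (Finset.sum_nonneg fun i _ => sq_nonneg ((a i : ℤ) - b (σ i))))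
    have hab : a = b ∘ σ := by
      funext i
      have hi := pow_eq_zero_iff two_ne_zero |>.1 (hzero i (Finset.mem_univ i))
      exact_mod_cast sub_eq_zero.1 hi
    rw [hab, ← Multiset.map_map, Multiset.map_univ_val_equiv]
end
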